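/- arXiv:2510.02113 — 3 statements merged into one kernel-verified Lean document; each statement's English description precedes it below -/
import Mathlib

section
/- Let G be a DAG containing no active cycle and let T = x_0 ⇄ x_1 ⇄ ⋯ ⇄ x_{n+1} (n ≥ 0) be a trail in G. If T is a shortest trail between x_0 and x_{n+1} activated by the empty set, then T has no chords. -/
open scoped Classical

/-- `E` is the arc relation of a (finite) directed acyclic graph: there are no
directed cycles (hence also no loops and no pairs of opposite arcs). -/
def IsDAG {V : Type*} (E : V → V → Prop) : Prop :=
  ∀ v : V, ¬ Relation.TransGen E v v

/-- `d` is a descendant of `v`: there is a (nonempty) directed path from `v` to `d`. -/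
def Desc {V : Type*} (E : V → V → Prop) (v d : V) : Prop :=
  Relation.TransGen E v d

/-- A trail: a sequence of `len + 1` pairwise distinct nodes
`f 0, f 1, …, f len`, consecutive ones joined by an arc of `E`
in one of the two possible directions.  Its length is `len`. -/
structure Trail (V : Type*) (E : V → V → Prop) where
  len : ℕ
  f : ℕ → V
  arcs : ∀ i, i < len → E (f i) (f (i + 1)) ∨ E (f (i + 1)) (f i)
  inj : ∀ i, i ≤ len → ∀ j, j ≤ len → f i = f j → i = j

namespace Trail

variable {V : Type*} {E : V → V → Prop}

/-- The trail has a converging connection at the interior index `i`: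
`f (i-1) → f i ← f (i+1)`. -/
def ConvAt (T : Trail V E) (i : ℕ) : Prop :=
  0 < i ∧ i < T.len ∧ E (T.f (i - 1)) (T.f i) ∧ E (T.f (i + 1)) (T.f i)

/-- The trail is activated by `Z`: every interior converging node is in `Z` or has a
descendant in `Z`, and every interior non-converging node is not in `Z`. -/
def ActivatedBy (T : Trail V E) (Z : Set V) : Prop :=
  ∀ i, 0 < i → i < T.len →
    (T.ConvAt i → (T.f i ∈ Z ∨ ∃ d ∈ Z, Desc E (T.f i) d)) ∧
    (¬ T.ConvAt i → T.f i ∉ Z)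

/-- The trail has a chord: an arc of `E` between two non-consecutive nodes. -/
def HasChord (T : Trail V E) : Prop :=
  ∃ i j, i + 1 < j ∧ j ≤ T.len ∧ (E (T.f i) (T.f j) ∨ E (T.f j) (T.f i))

end Trail

/-- `E` contains an active cycle: a closed trail
`v ← x 0 ⇄ x 1 ⇄ ⋯ ⇄ x n ⇄ x (n+1) → v` (so `w = x 0` and `z = x (n+1)` are
distinct parents of `v`), with `n ≥ 1`, such that the trail
`x 0 ⇄ ⋯ ⇄ x (n+1)` has no converging connection and the closed trail has no chords. -/
def HasActiveCycle {V : Type*} (E : V → V → Prop) : Prop :=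
  ∃ (v : V) (n : ℕ) (x : ℕ → V),
    1 ≤ n ∧
    E (x 0) v ∧ E (x (n + 1)) v ∧
    (∀ i, i ≤ n + 1 → x i ≠ v) ∧
    (∀ i, i ≤ n + 1 → ∀ j, j ≤ n + 1 → x i = x j → i = j) ∧
    (∀ i, i < n + 1 → E (x i) (x (i + 1)) ∨ E (x (i + 1)) (x i)) ∧
    (∀ i, 0 < i → i < n + 1 → ¬ (E (x (i - 1)) (x i) ∧ E (x (i + 1)) (x i))) ∧
    (∀ i j, i + 1 < j → j ≤ n + 1 → ¬ (i = 0 ∧ j = n + 1) →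
      ¬ E (x i) (x j) ∧ ¬ E (x j) (x i)) ∧
    (∀ i, 1 ≤ i → i ≤ n → ¬ E v (x i) ∧ ¬ E (x i) v)

namespace Trail

variable {V : Type*} {E : V → V → Prop}

/-- A trail is activated by the empty set iff it has no converging connection. -/
theorem activatedBy_empty_iff (T : Trail V E) :
    T.ActivatedBy (∅ : Set V) ↔ ∀ i, ¬ T.ConvAt i := by
  constructor
  · intro h i hi
    simpa using (h i hi.1 hi.2.1).1 hi
  · intro h i _ _
    exact ⟨fun hi => absurd hi (h i), fun _ => Set.notMem_empty _⟩

/-- On a trail without converging connections, an arc pointing forward into `f i` forces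
all later arcs to point forward. -/
theorem transGen_forward (T : Trail V E) (hT : ∀ i, ¬ T.ConvAt i) {i : ℕ} (hi : 0 < i)
    (hE : E (T.f (i - 1)) (T.f i)) {j : ℕ} (hij : i < j) (hj : j ≤ T.len) :
    Relation.TransGen E (T.f i) (T.f j) := by
  suffices h : Relation.TransGen E (T.f i) (T.f j) ∧ E (T.f (j - 1)) (T.f j) from h.1
  induction j, hij using Nat.le_induction with
  | base =>
    have h : E (T.f i) (T.f (i + 1)) := (T.arcs i (by omega)).resolve_right fun h =>
      hT i ⟨hi, by omega, hE, h⟩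
    exact ⟨.single h, h⟩
  | succ j hij ih =>
    obtain ⟨hpath, harc⟩ := ih (by omega)
    have h : E (T.f j) (T.f (j + 1)) := (T.arcs j (by omega)).resolve_right fun h =>
      hT j ⟨by omega, by omega, harc, h⟩
    exact ⟨hpath.tail h, h⟩

/-- On a trail without converging connections, an arc pointing backward into `f j` forces
all earlier arcs to point backward. -/
theorem transGen_backward (T : Trail V E) (hT : ∀ i, ¬ T.ConvAt i) {j : ℕ} (hj : j < T.len)
    (hE : E (T.f (j + 1)) (T.f j)) {i : ℕ} (hij : i < j) :
    Relation.TransGen E (T.f j) (T.f i) := by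
  induction j, hij using Nat.le_induction with
  | base =>
    exact .single ((T.arcs i (by omega)).resolve_left fun h =>
      hT (i + 1) ⟨by omega, hj, h, hE⟩)
  | succ j hij ih =>
    have h : E (T.f (j + 1)) (T.f j) := (T.arcs j (by omega)).resolve_left fun h =>
      hT (j + 1) ⟨by omega, hj, h, hE⟩
    exact .head h (ih (by omega) h)

/-- The trail obtained by replacing the segment between `f i` and `f j` by a chord. -/
def shortcut (T : Trail V E) (i j : ℕ) (hij : i + 1 < j) (hj : j ≤ T.len)
    (h : E (T.f i) (T.f j) ∨ E (T.f j) (T.f i)) : Trail V E where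
  len := T.len - (j - i - 1)
  f k := if k ≤ i then T.f k else T.f (k + (j - i - 1))
  arcs k hk := by
    rcases lt_trichotomy k i with hki | rfl | hki
    · simpa [hki.le, Nat.succ_le_of_lt hki] using T.arcs k (by omega)
    · simpa [show k + 1 + (j - k - 1) = j by omega] using h
    · simpa [show ¬ k ≤ i by omega, show ¬ k + 1 ≤ i by omega,
        show k + 1 + (j - i - 1) = k + (j - i - 1) + 1 by omega] using
        T.arcs (k + (j - i - 1)) (by omega)
  inj a ha b hb hab := by
    split_ifs at hab <;> have := T.inj _ (by omega) _ (by omega) hab <;> omega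

/-- In an acyclic graph, shortcutting a trail without converging connections along a chord
creates no converging connection. -/
theorem shortcut_not_convAt (hdag : IsDAG E) (T : Trail V E) (hT : ∀ i, ¬ T.ConvAt i)
    (i j : ℕ) (hij : i + 1 < j) (hj : j ≤ T.len)
    (h : E (T.f i) (T.f j) ∨ E (T.f j) (T.f i)) (k : ℕ) :
    ¬ (T.shortcut i j hij hj h).ConvAt k := by
  rintro ⟨hk, hkl, h₁, h₂⟩
  simp only [shortcut] at hkl h₁ h₂
  rcases lt_trichotomy k i with hki | rfl | hki
  · rw [if_pos (by omega), if_pos (by omega)] at h₁ h₂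
    exact hT k ⟨hk, by omega, h₁, h₂⟩
  · rw [if_pos (by omega), if_pos le_rfl] at h₁
    rw [if_neg (by omega), if_pos le_rfl, show k + 1 + (j - k - 1) = j by omega] at h₂
    exact hdag _ ((T.transGen_forward hT hk h₁ (by omega) hj).tail h₂)
  · rw [if_neg (by omega), if_neg (by omega)] at h₂
    rw [show k + 1 + (j - i - 1) = k + (j - i - 1) + 1 by omega] at h₂
    by_cases hk' : k = i + 1
    · subst hk'
      rw [if_pos (by omega), if_neg (by omega)] at h₁
      rw [show i + 1 + (j - i - 1) = j by omega] at h₁ h₂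
      exact hdag _ ((T.transGen_backward hT (by omega) h₂ (by omega)).tail h₁)
    · rw [if_neg (by omega), if_neg (by omega),
        show k - 1 + (j - i - 1) = k + (j - i - 1) - 1 by omega] at h₁
      exact hT _ ⟨by omega, by omega, h₁, h₂⟩

end Trail

/-- In a DAG with no active cycle, a shortest trail between its two
endpoints activated by the empty set has no chords. -/
theorem shortest_empty_activated_trail_no_chord
    {V : Type*} [Fintype V] (E : V → V → Prop) (hdag : IsDAG E)
    (hnac : ¬ HasActiveCycle E) (T : Trail V E) (hlen : 1 ≤ T.len)
    (hact : T.ActivatedBy (∅ : Set V))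
    (hmin : ∀ T' : Trail V E, T'.f 0 = T.f 0 → T'.f T'.len = T.f T.len →
      T'.ActivatedBy (∅ : Set V) → T.len ≤ T'.len) :
    ¬ T.HasChord := by
  rintro ⟨i, j, hij, hj, h⟩
  have hT := T.activatedBy_empty_iff.1 hact
  have hle := hmin (T.shortcut i j hij hj h) (by simp [Trail.shortcut])
    (by
      simp only [Trail.shortcut]
      rw [if_neg (by omega), show T.len - (j - i - 1) + (j - i - 1) = T.len by omega])
    ((Trail.activatedBy_empty_iff _).2 (T.shortcut_not_convAt hdag hT i j hij hj h))
  simp only [Trail.shortcut] at hle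
  omega
end

section
/- Let G be a DAG containing no active cycle, let X, Y, Z ⊆ V be disjoint with TRAILS(X,Y,Z) ≠ ∅, and let T be a minimal element of TRAILS(X,Y,Z) with respect to <_TRAIL, with converging nodes c_1, …, c_C, subtrail nodes t^i_j and descendant-path nodes d^i_j. Then every subtrail node t^i_j and every descendant-path node d^i_j lies outside X ∪ Y ∪ Z. -/
open scoped Classical

/-- A descendant path from `c` to `Z` with `n` intermediate nodes:
`c = d 0 → d 1 → ⋯ → d n → d (n+1) ∈ Z`, with `d j ∉ Z` for all `j ≤ n`. -/
def IsDescPath {V : Type*} (E : V → V → Prop) (Z : Set V) (c : V) (d : ℕ → V) (n : ℕ) :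
    Prop :=
  d 0 = c ∧ d (n + 1) ∈ Z ∧ (∀ j, j ≤ n → d j ∉ Z) ∧ (∀ j, j ≤ n → E (d j) (d (j + 1)))

/-- `n_Z(c)`: the least number of intermediate nodes of a descendant path from `c` to `Z`
(this is `0` when `c ∈ Z`, since then no descendant path exists and `sInf ∅ = 0`). -/
noncomputable def nZ {V : Type*} (E : V → V → Prop) (Z : Set V) (c : V) : ℕ :=
  sInf {n | ∃ d : ℕ → V, IsDescPath E Z c d n}

namespace Trail

variable {V : Type*} {E : V → V → Prop}

/-- The set of (interior) indices of `T` carrying a converging connection. -/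
noncomputable def convIdx (T : Trail V E) : Finset ℕ :=
  (Finset.Ioo 0 T.len).filter fun i => T.ConvAt i

/-- The weight vector `(|{c₁,…,c_C} \ Z|, C, Σᵢ n_Z(i), Σᵢ n_t(i))` of a trail,
whose lexicographic comparison induces the order `<_TRAIL`.  (The total length
of the subtrails, `Σᵢ n_t(i)`, equals `len - 1 - C`.) -/
noncomputable def weight (T : Trail V E) (Z : Set V) : ℕ × ℕ × ℕ × ℕ :=
  ((T.convIdx.filter fun i => T.f i ∉ Z).card,
   T.convIdx.card,
   ∑ i ∈ T.convIdx, nZ E Z (T.f i),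
   T.len - 1 - T.convIdx.card)

end Trail

/-- Strict lexicographic order on `ℕ × ℕ × ℕ × ℕ`. -/
def LexLt4 (a b : ℕ × ℕ × ℕ × ℕ) : Prop :=
  a.1 < b.1 ∨ (a.1 = b.1 ∧ (a.2.1 < b.2.1 ∨ (a.2.1 = b.2.1 ∧
    (a.2.2.1 < b.2.2.1 ∨ (a.2.2.1 = b.2.2.1 ∧ a.2.2.2 < b.2.2.2)))))

/-- `T ∈ TRAILS(X, Y, Z)`: `T` is a trail from a node of `X` to a node of `Y`
activated by `Z`. -/
def InTRAILS {V : Type*} {E : V → V → Prop} (T : Trail V E) (X Y Z : Set V) : Prop :=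
  T.f 0 ∈ X ∧ T.f T.len ∈ Y ∧ T.ActivatedBy Z

/-- `T` is a minimal element of `TRAILS(X, Y, Z)` with respect to `<_TRAIL`. -/
def MinimalTrail {V : Type*} {E : V → V → Prop} (T : Trail V E) (X Y Z : Set V) : Prop :=
  InTRAILS T X Y Z ∧
    ∀ T' : Trail V E, InTRAILS T' X Y Z → ¬ LexLt4 (T'.weight Z) (T.weight Z)

namespace Trail

variable {V : Type*} {E : V → V → Prop}

theorem mem_convIdx {T : Trail V E} {i : ℕ} : i ∈ T.convIdx ↔ T.ConvAt i := by
  simp only [convIdx, Finset.mem_filter, Finset.mem_Ioo, and_iff_right_iff_imp]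
  exact fun h => ⟨h.1, h.2.1⟩

/-- The trail traversed backwards. -/
def reverse (T : Trail V E) : Trail V E where
  len := T.len
  f i := T.f (T.len - i)
  arcs i hi := by
    have h := T.arcs (T.len - (i + 1)) (by omega)
    rw [show T.len - (i + 1) + 1 = T.len - i by omega] at h
    exact h.symm
  inj i hi j hj h := by
    have := T.inj _ (Nat.sub_le _ _) _ (Nat.sub_le _ _) h
    omega

theorem reverse_convAt_iff (T : Trail V E) {i : ℕ} (hi : i ≤ T.len) :
    T.reverse.ConvAt i ↔ T.ConvAt (T.len - i) := by
  simp only [ConvAt, reverse]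
  constructor
  · rintro ⟨h0, hl, h1, h2⟩
    refine ⟨by omega, by omega, ?_, ?_⟩
    · rwa [Nat.sub_sub]
    · rwa [show T.len - i + 1 = T.len - (i - 1) by omega]
  · rintro ⟨h0, hl, h1, h2⟩
    refine ⟨by omega, by omega, ?_, ?_⟩
    · rwa [show T.len - (i - 1) = T.len - i + 1 by omega]
    · rwa [← Nat.sub_sub]

theorem reverse_convIdx (T : Trail V E) :
    T.reverse.convIdx = T.convIdx.image (T.len - ·) := by
  ext i
  simp only [Finset.mem_image, mem_convIdx]
  constructor
  · intro h
    have hi : i < T.len := h.2.1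
    exact ⟨T.len - i, (T.reverse_convAt_iff hi.le).1 h, by omega⟩
  · rintro ⟨k, hk, rfl⟩
    have hk' : k < T.len := hk.2.1
    rw [T.reverse_convAt_iff (Nat.sub_le _ _), show T.len - (T.len - k) = k by omega]
    exact hk

theorem reverse_weight (T : Trail V E) (Z : Set V) : T.reverse.weight Z = T.weight Z := by
  have hlt : ∀ i ∈ T.convIdx, i < T.len := fun i hi => (mem_convIdx.1 hi).2.1
  have hinj : Set.InjOn (T.len - ·) (T.convIdx : Set ℕ) := by
    intro i hi j hj h
    have h1 := hlt i hi
    have h2 := hlt j hj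
    simp only at h
    omega
  have hf : ∀ i ∈ T.convIdx, T.reverse.f (T.len - i) = T.f i := by
    intro i hi
    have h1 := hlt i hi
    simp only [reverse]
    rw [show T.len - (T.len - i) = i by omega]
  have hcard : T.reverse.convIdx.card = T.convIdx.card := by
    rw [reverse_convIdx, Finset.card_image_of_injOn hinj]
  simp only [weight, Prod.mk.injEq]
  refine ⟨?_, hcard, ?_, by rw [hcard]; rfl⟩
  · rw [reverse_convIdx, Finset.filter_image,
      Finset.card_image_of_injOn (hinj.mono (Finset.coe_subset.2 (Finset.filter_subset _ _)))]
    congr 1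
    exact Finset.filter_congr fun i hi => by rw [hf i hi]
  · rw [reverse_convIdx, Finset.sum_image hinj]
    exact Finset.sum_congr rfl fun i hi => by rw [hf i hi]

end Trail

theorem InTRAILS.reverse {V : Type*} {E : V → V → Prop} {T : Trail V E} {X Y Z : Set V}
    (h : InTRAILS T X Y Z) : InTRAILS T.reverse Y X Z := by
  refine ⟨?_, ?_, fun i h0 hl => ?_⟩
  · simpa [Trail.reverse] using h.2.1
  · simpa [Trail.reverse] using h.1
  · have hl' : i < T.len := hl
    rw [T.reverse_convAt_iff hl'.le]
    exact h.2.2 (T.len - i) (by omega) (by omega)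

theorem MinimalTrail.reverse {V : Type*} {E : V → V → Prop} {T : Trail V E} {X Y Z : Set V}
    (h : MinimalTrail T X Y Z) : MinimalTrail T.reverse Y X Z := by
  refine ⟨h.1.reverse, fun T' hT' => ?_⟩
  have := h.2 T'.reverse hT'.reverse
  rwa [Trail.reverse_weight] at this ⊢

theorem IsDAG.not_arc_of_arc {V : Type*} {E : V → V → Prop} (hdag : IsDAG E) {u v : V}
    (h : E u v) : ¬ E v u :=
  fun h' => hdag u (.tail (.single h) h')

/-- Replacing the part of an activated trail before index `m` by a reversed directed path
`p 0 ← p 1 ← ⋯ ← p q = T.f m` avoiding `Z` and the rest of the trail gives an activated trail,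
whose converging connections come from those of `T` after `m`. -/
theorem InTRAILS.exists_splice {V : Type*} {E : V → V → Prop} (hdag : IsDAG E)
    {T : Trail V E} {X Y Z : Set V} (hT : InTRAILS T X Y Z) {m q : ℕ} (hm : m ≤ T.len)
    (p : ℕ → V) (hX : p 0 ∈ X) (hpq : p q = T.f m) (hpZ : ∀ s ≤ q, p s ∉ Z)
    (hpE : ∀ s < q, E (p (s + 1)) (p s))
    (hpinj : ∀ s < q, ∀ t < q, p s = p t → s = t)
    (hpT : ∀ s < q, ∀ l, m ≤ l → l ≤ T.len → p s ≠ T.f l) :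
    ∃ T' : Trail V E, InTRAILS T' X Y Z ∧ T'.len = q + (T.len - m) ∧
      ∃ φ : ℕ → ℕ, Set.InjOn φ T'.convIdx ∧
        ∀ s ∈ T'.convIdx, φ s ∈ T.convIdx ∧ m < φ s ∧ T'.f s = T.f (φ s) := by
  set g : ℕ → V := fun s => if s < q then p s else T.f (m + (s - q)) with hg
  have g_le : ∀ s ≤ q, g s = p s := by
    intro s hs
    rcases hs.lt_or_eq with h | rfl
    · simp [hg, h]
    · simp [hg, hpq]
  have g_ge : ∀ s, q ≤ s → g s = T.f (m + (s - q)) := by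
    intro s hs
    simp [hg, not_lt.2 hs]
  let T' : Trail V E :=
    { len := q + (T.len - m)
      f := g
      arcs := by
        intro i hi
        rcases lt_or_ge i q with h | h
        · rw [g_le i h.le, g_le (i + 1) h]
          exact .inr (hpE i h)
        · rw [g_ge i h, g_ge (i + 1) (by omega),
            show m + (i + 1 - q) = m + (i - q) + 1 by omega]
          exact T.arcs _ (by omega)
      inj := by
        intro i hi j hj h
        rcases lt_or_ge i q with h1 | h1 <;> rcases lt_or_ge j q with h2 | h2
        · rw [g_le i h1.le, g_le j h2.le] at h
          exact hpinj i h1 j h2 h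
        · rw [g_le i h1.le, g_ge j h2] at h
          exact absurd h (hpT i h1 _ (by omega) (by omega))
        · rw [g_ge i h1, g_le j h2.le] at h
          exact absurd h.symm (hpT j h2 _ (by omega) (by omega))
        · rw [g_ge i h1, g_ge j h2] at h
          have := T.inj _ (by omega) _ (by omega) h
          omega }
  have conv_gt : ∀ s, T'.ConvAt s → q < s := by
    rintro s ⟨h0, -, h1, -⟩
    by_contra hs
    have h2 : E (g (s - 1)) (g s) := h1
    rw [g_le s (by omega), g_le (s - 1) (by omega)] at h2
    have h3 := hpE (s - 1) (by omega)
    rw [Nat.sub_add_cancel h0] at h3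
    exact hdag.not_arc_of_arc h2 h3
  have conv_iff : ∀ s, q < s → (T'.ConvAt s ↔ T.ConvAt (m + (s - q))) := by
    intro s hs
    have e1 : T'.f (s - 1) = T.f (m + (s - q) - 1) := by
      rw [show m + (s - q) - 1 = m + (s - 1 - q) by omega]
      exact g_ge _ (by omega)
    have e2 : T'.f s = T.f (m + (s - q)) := g_ge _ hs.le
    have e3 : T'.f (s + 1) = T.f (m + (s - q) + 1) := by
      rw [show m + (s - q) + 1 = m + (s + 1 - q) by omega]
      exact g_ge _ (by omega)
    have e4 : T'.len = q + (T.len - m) := rfl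
    simp only [Trail.ConvAt, e1, e2, e3, e4]
    exact and_congr (by omega) (and_congr_left' (by omega))
  refine ⟨T', ⟨?_, ?_, fun s h0 hl => ?_⟩, rfl, fun s => m + (s - q), ?_, ?_⟩
  · change g 0 ∈ X
    rwa [g_le 0 (Nat.zero_le _)]
  · change g (q + (T.len - m)) ∈ Y
    rw [g_ge _ (by omega), show m + (q + (T.len - m) - q) = T.len by omega]
    exact hT.2.1
  · have hl' : s < q + (T.len - m) := hl
    rcases lt_or_ge q s with hs | hs
    · rw [conv_iff s hs, show T'.f s = T.f (m + (s - q)) from g_ge _ hs.le]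
      exact hT.2.2 _ (by omega) (by omega)
    · refine ⟨fun h => absurd (conv_gt s h) (by omega), fun _ => ?_⟩
      change g s ∉ Z
      rw [g_le s hs]
      exact hpZ s hs
  · intro s hs t ht h
    have h1 := conv_gt s (Trail.mem_convIdx.1 hs)
    have h2 := conv_gt t (Trail.mem_convIdx.1 ht)
    simp only at h
    omega
  · intro s hs
    have h1 := conv_gt s (Trail.mem_convIdx.1 hs)
    exact ⟨Trail.mem_convIdx.2 ((conv_iff s h1).1 (Trail.mem_convIdx.1 hs)),
      show m < m + (s - q) by omega, g_ge _ h1.le⟩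

theorem MinimalTrail.subtrail_node_notMem_left {V : Type*} {E : V → V → Prop} (hdag : IsDAG E)
    {T : Trail V E} {X Y Z : Set V} (hT : MinimalTrail T X Y Z) {i : ℕ} (h0 : 0 < i)
    (hl : i < T.len) (hi : ¬ T.ConvAt i) : T.f i ∉ X := by
  intro hX
  obtain ⟨T', hT', hlen, φ, hinj, hφ⟩ := hT.1.exists_splice hdag (m := i) (q := 0) hl.le
    (fun _ => T.f i) hX rfl (fun _ _ => (hT.1.2.2 i h0 hl).2 hi) (by simp) (by simp) (by simp)
  have hsub : T'.convIdx.image φ ⊆ T.convIdx := by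
    intro k hk
    obtain ⟨s, hs, rfl⟩ := Finset.mem_image.1 hk
    exact (hφ s hs).1
  have hcard : T'.convIdx.card ≤ T.convIdx.card := by
    rw [← Finset.card_image_of_injOn hinj]
    exact Finset.card_le_card hsub
  have hfst : (T'.weight Z).1 ≤ (T.weight Z).1 := by
    simp only [Trail.weight]
    refine Finset.card_le_card_of_injOn φ (fun s hs => ?_)
      (hinj.mono (Finset.coe_subset.2 (Finset.filter_subset _ _)))
    obtain ⟨hs, hsZ⟩ := Finset.mem_filter.1 hs
    obtain ⟨h1, -, h2⟩ := hφ s hs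
    exact Finset.mem_coe.2 (Finset.mem_filter.2 ⟨h1, h2 ▸ hsZ⟩)
  have hsum : (T'.weight Z).2.2.1 ≤ (T.weight Z).2.2.1 := by
    have : ∑ s ∈ T'.convIdx, nZ E Z (T'.f s) = ∑ k ∈ T'.convIdx.image φ, nZ E Z (T.f k) := by
      rw [Finset.sum_image hinj]
      exact Finset.sum_congr rfl fun s hs => by rw [(hφ s hs).2.2]
    exact this.trans_le (Finset.sum_le_sum_of_subset hsub)
  have hcard_lt : T.convIdx.card < T.len - 1 := by
    have hss : T.convIdx ⊂ Finset.Ioo 0 T.len := by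
      refine Finset.ssubset_iff_subset_ne.2 ⟨Finset.filter_subset _ _, fun h => hi ?_⟩
      exact Trail.mem_convIdx.1 (h ▸ Finset.mem_Ioo.2 ⟨h0, hl⟩)
    simpa using Finset.card_lt_card hss
  refine hT.2 T' hT' ?_
  have h2 : (T'.weight Z).2.1 = T'.convIdx.card := rfl
  have h3 : (T.weight Z).2.1 = T.convIdx.card := rfl
  have h4 : (T'.weight Z).2.2.2 = T'.len - 1 - T'.convIdx.card := rfl
  have h5 : (T.weight Z).2.2.2 = T.len - 1 - T.convIdx.card := rfl
  unfold LexLt4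
  omega

theorem IsDescPath.injOn {V : Type*} {E : V → V → Prop} (hdag : IsDAG E) {Z : Set V} {c : V}
    {d : ℕ → V} {n : ℕ} (hd : IsDescPath E Z c d n) : Set.InjOn d (Set.Iic n) := by
  have hlt : ∀ a b, a < b → b ≤ n → d a ≠ d b := by
    intro a b hab
    suffices b ≤ n → Relation.TransGen E (d a) (d b) from
      fun hb h => hdag (d b) (h ▸ this hb)
    induction b, hab using Nat.le_induction with
    | base => exact fun hb => .single (hd.2.2.2 a (by omega))
    | succ b hb ih => exact fun hb => .tail (ih (by omega)) (hd.2.2.2 b (by omega))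
  intro a ha b hb h
  simp only [Set.mem_Iic] at ha hb
  rcases lt_trichotomy a b with hab | hab | hab
  · exact absurd h (hlt a b hab hb)
  · exact hab
  · exact absurd h.symm (hlt b a hab ha)

theorem MinimalTrail.descPath_node_notMem_left {V : Type*} {E : V → V → Prop} (hdag : IsDAG E)
    {T : Trail V E} {X Y Z : Set V} (hT : MinimalTrail T X Y Z) {i : ℕ} (hi : T.ConvAt i)
    {d : ℕ → V} {n : ℕ} (hd : IsDescPath E Z (T.f i) d n) {j : ℕ} (hj : j ≤ n) : d j ∉ X := by
  intro hX
  -- `k` is the last index up to `j` at which the descendant path meets the trail from `i` on.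
  let P : ℕ → Prop := fun k => ∃ m, i ≤ m ∧ m ≤ T.len ∧ d k = T.f m
  have hP0 : P 0 := ⟨i, le_rfl, hi.2.1.le, hd.1⟩
  obtain ⟨m, him, hm, hdm⟩ : P (Nat.findGreatest P j) :=
    Nat.findGreatest_spec (Nat.zero_le j) hP0
  have hmax : ∀ k, Nat.findGreatest P j < k → k ≤ j → ¬ P k :=
    fun k => Nat.findGreatest_is_greatest
  have hkj : Nat.findGreatest P j ≤ j := Nat.findGreatest_le j
  generalize Nat.findGreatest P j = k at hdm hmax hkj
  obtain ⟨T', hT', -, φ, hinj, hφ⟩ := hT.1.exists_splice hdag (m := m) (q := j - k) hm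
    (fun s => d (j - s)) hX (by simpa [Nat.sub_sub_self hkj] using hdm)
    (fun s _ => hd.2.2.1 _ (by omega))
    (fun s hs => by
      have h := hd.2.2.2 (j - (s + 1)) (by omega)
      rwa [show j - (s + 1) + 1 = j - s by omega] at h)
    (fun s hs t ht h => by
      have := hd.injOn hdag (Set.mem_Iic.2 (by omega)) (Set.mem_Iic.2 (by omega)) h
      omega)
    (fun s hs l hml hl h => hmax (j - s) (by omega) (by omega) ⟨l, by omega, hl, h⟩)
  refine hT.2 T' hT' (.inl ?_)
  have hmem : i ∈ T.convIdx.filter fun i => T.f i ∉ Z :=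
    Finset.mem_filter.2 ⟨Trail.mem_convIdx.2 hi, hd.1 ▸ hd.2.2.1 0 (Nat.zero_le _)⟩
  refine lt_of_le_of_lt (Finset.card_le_card_of_injOn φ (fun s hs => ?_)
    (hinj.mono (Finset.coe_subset.2 (Finset.filter_subset _ _)))) (Finset.card_erase_lt_of_mem hmem)
  obtain ⟨hs, hsZ⟩ := Finset.mem_filter.1 hs
  obtain ⟨h1, h2, h3⟩ := hφ s hs
  exact Finset.mem_coe.2 (Finset.mem_erase.2 ⟨by omega, Finset.mem_filter.2 ⟨h1, h3 ▸ hsZ⟩⟩)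

/-- For a minimal trail `T` of `TRAILS(X,Y,Z)`, every interior
non-converging (subtrail) node and every intermediate node of a (shortest) descendant
path of a converging node lies outside `X ∪ Y ∪ Z`. -/
theorem minimal_trail_subtrail_and_descendant_nodes_outside
    {V : Type*} [Fintype V] (E : V → V → Prop) (hdag : IsDAG E)
    (hnac : ¬ HasActiveCycle E) (X Y Z : Set V)
    (hXY : Disjoint X Y) (hXZ : Disjoint X Z) (hYZ : Disjoint Y Z)
    (hne : ∃ T₀ : Trail V E, InTRAILS T₀ X Y Z)
    (T : Trail V E) (hT : MinimalTrail T X Y Z) :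
    (∀ i, 0 < i → i < T.len → ¬ T.ConvAt i → T.f i ∉ X ∪ Y ∪ Z) ∧
    (∀ i, T.ConvAt i → ∀ (d : ℕ → V) (n : ℕ), IsDescPath E Z (T.f i) d n →
      (∀ (d' : ℕ → V) (n' : ℕ), IsDescPath E Z (T.f i) d' n' → n ≤ n') →
      ∀ j, 1 ≤ j → j ≤ n → d j ∉ X ∪ Y ∪ Z) := by
  refine ⟨fun i h0 hl hi => ?_, fun i hi d n hd _ j _ hj => ?_⟩
  · have hY : T.f i ∉ Y := by
      have h := hT.reverse.subtrail_node_notMem_left hdag (i := T.len - i) (by omega)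
        (show T.len - i < T.len by omega)
      rw [T.reverse_convAt_iff (Nat.sub_le _ _)] at h
      simp only [Trail.reverse, Nat.sub_sub_self hl.le] at h
      exact h hi
    simp only [Set.mem_union, not_or]
    exact ⟨⟨hT.subtrail_node_notMem_left hdag h0 hl hi, hY⟩, (hT.1.2.2 i h0 hl).2 hi⟩
  · have hY : d j ∉ Y := by
      have hi' : T.reverse.ConvAt (T.len - i) := by
        rwa [T.reverse_convAt_iff (Nat.sub_le _ _), Nat.sub_sub_self hi.2.1.le]
      refine hT.reverse.descPath_node_notMem_left hdag hi' (n := n) ?_ hj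
      simpa only [Trail.reverse, Nat.sub_sub_self hi.2.1.le] using hd
    simp only [Set.mem_union, not_or]
    exact ⟨⟨hT.descPath_node_notMem_left hdag hi hd hj, hY⟩, hd.2.2.1 j hj⟩
end

section
/- Let G be a DAG and K ⊆ V. The set K has local relationships if and only if there exists a partition K = K_1 ⊔ ⋯ ⊔ K_k such that each part K_i is connected and has local relationships, and for all i ≠ j, K_i and K_j are d-separated by the empty set. -/
open scoped Classical

/-- `K` has local relationships: whenever two nodes of `K` are joined by a trail with
no converging connection all of whose interior nodes avoid `K`, they are adjacent. -/
def LocalRel {V : Type*} (E : V → V → Prop) (K : Set V) : Prop :=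
  ∀ T : Trail V E, 1 ≤ T.len → T.f 0 ∈ K → T.f T.len ∈ K →
    (∀ i, 0 < i → i < T.len → T.f i ∉ K) →
    (∀ i, 0 < i → i < T.len → ¬ T.ConvAt i) →
    E (T.f 0) (T.f T.len) ∨ E (T.f T.len) (T.f 0)

/-- `S` d-separates `A` and `B`: every trail from a node of `A` to a node of `B`
is blocked by (i.e. not activated by) `S`. -/
def DSep {V : Type*} (E : V → V → Prop) (A B S : Set V) : Prop :=
  ∀ T : Trail V E, T.f 0 ∈ A → T.f T.len ∈ B → ¬ T.ActivatedBy S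

/-- `S` is connected: any two distinct nodes of `S` are joined by a trail all of
whose nodes lie in `S`. -/
def ConnectedIn {V : Type*} (E : V → V → Prop) (S : Set V) : Prop :=
  ∀ v1 ∈ S, ∀ v2 ∈ S, v1 ≠ v2 → ∃ T : Trail V E,
    T.f 0 = v1 ∧ T.f T.len = v2 ∧ ∀ i, i ≤ T.len → T.f i ∈ S

/-- The undirected graph underlying the restriction of `E` to `K`. -/
def inducedGraph {V : Type*} (E : V → V → Prop) (K : Set V) : SimpleGraph V :=
  SimpleGraph.fromRel fun v w => v ∈ K ∧ w ∈ K ∧ E v w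

/-- The part of a trail between the indices `a` and `b`. -/
def Trail.segment {V : Type*} {E : V → V → Prop} (T : Trail V E) (a b : ℕ) (hb : b ≤ T.len) :
    Trail V E where
  len := b - a
  f i := T.f (a + i)
  arcs i hi := T.arcs (a + i) (by omega)
  inj i hi j hj h := by
    by_cases hab : a ≤ b
    · have := T.inj (a + i) (by omega) (a + j) (by omega) h
      omega
    · omega

theorem Trail.not_convAt_segment {V : Type*} {E : V → V → Prop} {T : Trail V E} {a b : ℕ}
    {hb : b ≤ T.len} (hconv : ∀ i, 0 < i → i < T.len → ¬ T.ConvAt i) (i : ℕ) :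
    ¬ (T.segment a b hb).ConvAt i := by
  rintro ⟨hi0, hi, h1, h2⟩
  simp only [Trail.segment] at hi h1 h2
  refine hconv (a + i) (by omega) (by omega) ⟨by omega, by omega, ?_, h2⟩
  rwa [Nat.add_sub_assoc hi0]

theorem Trail.activatedBy_empty_iff_s11 {V : Type*} {E : V → V → Prop} {T : Trail V E} :
    T.ActivatedBy ∅ ↔ ∀ i, 0 < i → i < T.len → ¬ T.ConvAt i := by
  simp [Trail.ActivatedBy]

theorem inducedGraph_reachable_mem {V : Type*} {E : V → V → Prop} {K : Set V} {v w : V}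
    (h : (inducedGraph E K).Reachable v w) (hv : v ∈ K) : w ∈ K := by
  obtain ⟨p⟩ := h
  induction p with
  | nil => exact hv
  | cons hadj _ ih =>
    rw [inducedGraph, SimpleGraph.fromRel_adj] at hadj
    exact ih (by tauto)

/-- Along a trail without converging connections, all nodes of a set with local relationships
lie in one component of that set. -/
theorem LocalRel.reachable_of_not_convAt {V : Type*} {E : V → V → Prop} {K : Set V}
    (hK : LocalRel E K) {T : Trail V E} (h0 : T.f 0 ∈ K)
    (hconv : ∀ i, 0 < i → i < T.len → ¬ T.ConvAt i) (m : ℕ) (hm : m ≤ T.len)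
    (hmK : T.f m ∈ K) : (inducedGraph E K).Reachable (T.f 0) (T.f m) := by
  induction m using Nat.strong_induction_on with
  | _ m ih =>
    rcases Nat.eq_zero_or_pos m with rfl | hpos
    · exact .rfl
    let a := Nat.findGreatest (fun i => T.f i ∈ K) (m - 1)
    have ha : a ≤ m - 1 := Nat.findGreatest_le _
    have haK : T.f a ∈ K :=
      Nat.findGreatest_spec (P := fun i => T.f i ∈ K) (Nat.zero_le _) h0
    have hbetween : ∀ i, a < i → i < m → T.f i ∉ K := fun i hai him =>
      Nat.findGreatest_is_greatest hai (by omega)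
    have ham : a + (m - a) = m := by omega
    have hadj := hK (T.segment a m hm) (by simp only [Trail.segment]; omega) haK
      (by simpa only [Trail.segment, ham] using hmK)
      (fun i hi him => hbetween _ (by omega) (by simp only [Trail.segment] at him; omega))
      (fun i _ _ => Trail.not_convAt_segment hconv i)
    simp only [Trail.segment, ham, add_zero] at hadj
    have hne : T.f a ≠ T.f m := fun h => by
      have := T.inj a (by omega) m hm h
      omega
    refine (ih a (by omega) (by omega) haK).trans (SimpleGraph.Adj.reachable ?_)
    rw [inducedGraph, SimpleGraph.fromRel_adj]
    tauto

/-- Nodes in the same component of `K` are joined by a trail within that component. -/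
theorem exists_trail_of_reachable {V : Type*} {E : V → V → Prop} {K : Set V} {v w : V}
    (h : (inducedGraph E K).Reachable v w) : ∃ T : Trail V E, T.f 0 = v ∧ T.f T.len = w ∧
      ∀ i, (inducedGraph E K).Reachable v (T.f i) := by
  obtain ⟨p, hp⟩ := h.exists_isPath
  refine ⟨⟨p.length, p.getVert, fun i hi => ?_,
    fun i hi j hj hij => hp.getVert_injOn hi hj hij⟩, p.getVert_zero, p.getVert_length,
    fun i => ⟨p.take i⟩⟩
  have hadj := (SimpleGraph.fromRel_adj _ _ _).1 (p.adj_getVert_succ hi)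
  tauto

/-- A set `K` has local relationships if and only if it admits a
partition into parts that are each connected with local relationships and pairwise
d-separated by the empty set. -/
theorem localRel_iff_partition
    {V : Type*} [Fintype V] (E : V → V → Prop) (hdag : IsDAG E) (K : Set V) :
    LocalRel E K ↔ ∃ (k : ℕ) (P : Fin k → Set V),
      (∀ i, (P i).Nonempty) ∧
      (∀ i j, i ≠ j → Disjoint (P i) (P j)) ∧
      (⋃ i, P i) = K ∧
      (∀ i, ConnectedIn E (P i) ∧ LocalRel E (P i)) ∧
      (∀ i j, i ≠ j → DSep E (P i) (P j) ∅) := by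
  constructor
  · intro hK
    let G := inducedGraph E K
    let comps : Set G.ConnectedComponent := G.connectedComponentMk '' K
    obtain ⟨k, ⟨e⟩⟩ := Finite.exists_equiv_fin comps
    let P : Fin k → Set V := fun i => {v | v ∈ K ∧ G.connectedComponentMk v = e.symm i}
    have hP : ∀ {i v w}, v ∈ P i → G.Reachable v w → w ∈ P i := fun hv hvw =>
      ⟨inducedGraph_reachable_mem hvw hv.1,
        (SimpleGraph.ConnectedComponent.sound hvw.symm).trans hv.2⟩
    have hdisj : ∀ {i j v}, v ∈ P i → v ∈ P j → i = j := fun hi hj =>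
      e.symm.injective (Subtype.ext (hi.2.symm.trans hj.2))
    refine ⟨k, P, fun i => ?_, fun i j hij => ?_, ?_, fun i => ⟨?_, ?_⟩, fun i j hij => ?_⟩
    · obtain ⟨v, hv, hvi⟩ := (e.symm i).2
      exact ⟨v, hv, hvi⟩
    · exact Set.disjoint_left.2 fun v hi hj => hij (hdisj hi hj)
    · ext v
      refine ⟨fun hv => ?_, fun hv => ?_⟩
      · obtain ⟨i, hi⟩ := Set.mem_iUnion.1 hv
        exact hi.1
      · exact Set.mem_iUnion.2 ⟨e ⟨_, v, hv, rfl⟩, hv, by simp⟩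
    · intro v hv w hw _
      obtain ⟨T, h0, h1, hT⟩ := exists_trail_of_reachable
        (SimpleGraph.ConnectedComponent.exact (hv.2.trans hw.2.symm))
      exact ⟨T, h0, h1, fun i _ => hP hv (hT i)⟩
    · intro T hlen h0 h1 hint hconv
      exact hK T hlen h0.1 h1.1 (fun m hm0 hm hmK => hint m hm0 hm
        (hP h0 (hK.reachable_of_not_convAt h0.1 hconv m hm.le hmK))) hconv
    · intro T h0 h1 hact
      exact hij (hdisj (hP h0 (hK.reachable_of_not_convAt h0.1
        (Trail.activatedBy_empty_iff_s11.1 hact) T.len le_rfl h1.1)) h1)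
  · rintro ⟨k, P, -, -, rfl, hP, hsep⟩ T hlen h0 h1 hint hconv
    obtain ⟨i, hi⟩ := Set.mem_iUnion.1 h0
    obtain ⟨j, hj⟩ := Set.mem_iUnion.1 h1
    obtain rfl : i = j := by
      by_contra hij
      exact hsep i j hij T hi hj (Trail.activatedBy_empty_iff_s11.2 hconv)
    exact (hP i).2 T hlen hi hj
      (fun m hm0 hm hmP => hint m hm0 hm (Set.mem_iUnion.2 ⟨i, hmP⟩)) hconv
end
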